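/- Every b-complete idempotent semifield is commutative under multiplication. -/

import Mathlib

/-- An idempotent commutative semigroup. -/
structure IdemSemigroup (S : Type*) where
  add : S → S → S
  add_comm : ∀ x y, add x y = add y x
  add_assoc : ∀ x y z, add (add x y) z = add x (add y z)
  add_idem : ∀ x, add x x = x

namespace IdemSemigroup
variable {S : Type*}

/-- The canonical order: x ≼ y iff x ⊕ y = y. -/
def le (A : IdemSemigroup S) (x y : S) : Prop := A.add x y = y
def UB (A : IdemSemigroup S) (X : Set S) (b : S) : Prop := ∀ x ∈ X, A.le x b
def LB (A : IdemSemigroup S) (X : Set S) (b : S) : Prop := ∀ x ∈ X, A.le b x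
def IsSup (A : IdemSemigroup S) (X : Set S) (s : S) : Prop :=
  A.UB X s ∧ ∀ b, A.UB X b → A.le s b
def IsInf (A : IdemSemigroup S) (X : Set S) (s : S) : Prop :=
  A.LB X s ∧ ∀ b, A.LB X b → A.le b s
/-- b-completeness: every subset bounded above (including ∅) has a least upper bound. -/
def BComplete (A : IdemSemigroup S) : Prop :=
  ∀ X : Set S, (∃ b, A.UB X b) → ∃ s, A.IsSup X s
/-- Linearly ordered subset. -/
def Chain (A : IdemSemigroup S) (X : Set S) : Prop :=
  ∀ x ∈ X, ∀ y ∈ X, A.le x y ∨ A.le y x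

end IdemSemigroup

/-- An idempotent semifield: idempotent semiring with all nonzero elements invertible. -/
structure IdemSemifield (K : Type*) extends IdemSemigroup K where
  mul : K → K → K
  one : K
  zero : K
  mul_assoc : ∀ x y z, mul (mul x y) z = mul x (mul y z)
  one_mul : ∀ x, mul one x = x
  mul_one : ∀ x, mul x one = x
  zero_add : ∀ x, add zero x = x
  zero_mul : ∀ x, mul zero x = zero
  mul_zero : ∀ x, mul x zero = zero
  left_distrib : ∀ x y z, mul x (add y z) = add (mul x y) (mul x z)
  right_distrib : ∀ x y z, mul (add x y) z = add (mul x z) (mul y z)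
  inv_exists : ∀ x, x ≠ zero → ∃ y, mul x y = one ∧ mul y x = one

namespace IdemSemifield
variable {K : Type*}
def BComplete (F : IdemSemifield K) : Prop := F.toIdemSemigroup.BComplete
def pow (F : IdemSemifield K) (x : K) : ℕ → K
  | 0 => F.one
  | n + 1 => F.mul x (F.pow x n)
/-- Algebraically closed: n-th roots exist. -/
def AlgClosed (F : IdemSemifield K) : Prop :=
  ∀ x : K, ∀ n : ℕ, 0 < n → ∃ y, F.pow y n = x
end IdemSemifield

/-- An idempotent semimodule over an idempotent semifield. -/
structure IdemSemimodule {K : Type*} (F : IdemSemifield K) (V : Type*) extends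
    IdemSemigroup V where
  smul : K → V → V
  zero : V
  zero_add : ∀ x, add zero x = x
  smul_smul : ∀ a b x, smul a (smul b x) = smul (F.mul a b) x
  add_smul : ∀ a b x, smul (F.add a b) x = add (smul a x) (smul b x)
  smul_add : ∀ a x y, smul a (add x y) = add (smul a x) (smul a y)
  zero_smul : ∀ x, smul F.zero x = zero
  one_smul : ∀ x, smul F.one x = x

/-- An idempotent b-space: b-complete semimodule, scalar multiplication compatible
with bounded sups and infs of scalars. -/
structure IdemBSpace {K : Type*} (F : IdemSemifield K) (V : Type*) extends
    IdemSemimodule F V where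
  bcomplete : toIdemSemigroup.BComplete
  smul_sup : ∀ (Q : Set K) (x : V) (s : K), Q.Nonempty →
    F.toIdemSemigroup.IsSup Q s →
    toIdemSemigroup.IsSup ((fun a => smul a x) '' Q) (smul s x)
  smul_inf : ∀ (Q : Set K) (x : V) (s : K), Q.Nonempty →
    (∃ b, F.toIdemSemigroup.UB Q b) →
    F.toIdemSemigroup.IsInf Q s →
    toIdemSemigroup.IsInf ((fun a => smul a x) '' Q) (smul s x)

namespace IdemBSpace
variable {K V : Type*} {F : IdemSemifield K}

def le (B : IdemBSpace F V) (x y : V) : Prop := B.toIdemSemigroup.le x y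
def IsSup (B : IdemBSpace F V) (X : Set V) (s : V) : Prop := B.toIdemSemigroup.IsSup X s
def IsInf (B : IdemBSpace F V) (X : Set V) (s : V) : Prop := B.toIdemSemigroup.IsInf X s
def Chain (B : IdemBSpace F V) (X : Set V) : Prop := B.toIdemSemigroup.Chain X

def Subspace (B : IdemBSpace F V) (W : Set V) : Prop :=
  (∀ x ∈ W, ∀ y ∈ W, B.add x y ∈ W) ∧ (∀ (a : K), ∀ x ∈ W, B.smul a x ∈ W)

/-- wo-closed: sups of bounded linearly ordered subsets and infs of nonempty linearly
ordered subsets (taken in V) belong to the set. -/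
def WOClosed (B : IdemBSpace F V) (M : Set V) : Prop :=
  ∀ X ⊆ M, B.Chain X →
    (∀ s, B.IsSup X s → s ∈ M) ∧ (∀ s, X.Nonempty → B.IsInf X s → s ∈ M)

/-- Archimedean element. -/
def ArchElem (B : IdemBSpace F V) (x : V) : Prop :=
  ∀ y, ∃ a : K, B.le y (B.smul a x)

/-- f is the functional x*: x*(y) = inf { k | k ⊙ x ≽ y }. -/
def IsStar (B : IdemBSpace F V) (x : V) (f : V → K) : Prop :=
  ∀ y, F.toIdemSemigroup.IsInf {k | B.le y (B.smul k x)} (f y)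

/-- wo-continuity of the functional f: it preserves sups and infs of bounded
linearly ordered subsets. -/
def WOContStar (B : IdemBSpace F V) (f : V → K) : Prop :=
  (∀ X : Set V, B.Chain X → ∀ s, B.IsSup X s → F.toIdemSemigroup.IsSup (f '' X) (f s)) ∧
  (∀ X : Set V, B.Chain X → X.Nonempty → ∀ s, B.IsInf X s →
    F.toIdemSemigroup.IsInf (f '' X) (f s))

/-- wo-continuous element: its star functional is wo-continuous. -/
def WOContElem (B : IdemBSpace F V) (x : V) : Prop :=
  ∃ f, B.IsStar x f ∧ B.WOContStar f

/-- Archimedean space: contains a wo-continuous Archimedean element. -/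
def ArchSpace (B : IdemBSpace F V) : Prop :=
  ∃ x, B.ArchElem x ∧ B.WOContElem x

/-- The subspace W, with the induced structure, is an Archimedean space. -/
def ArchOn (B : IdemBSpace F V) (W : Set V) : Prop :=
  ∃ x ∈ W, (∀ y ∈ W, ∃ a : K, B.le y (B.smul a x)) ∧
    ∃ f : V → K,
      (∀ y ∈ W, F.toIdemSemigroup.IsInf {k | B.le y (B.smul k x)} (f y)) ∧
      (∀ X ⊆ W, B.Chain X → ∀ s ∈ W, B.IsSup X s →
        F.toIdemSemigroup.IsSup (f '' X) (f s)) ∧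
      (∀ X ⊆ W, B.Chain X → X.Nonempty → ∀ s ∈ W, B.IsInf X s →
        F.toIdemSemigroup.IsInf (f '' X) (f s))

/-- b-linear map of the space into itself. -/
def BLinearMap (B : IdemBSpace F V) (g : V → V) : Prop :=
  (∀ x y, g (B.add x y) = B.add (g x) (g y)) ∧
  (∀ (a : K) x, g (B.smul a x) = B.smul a (g x)) ∧
  (∀ (X : Set V) s, B.IsSup X s → B.IsSup (g '' X) (g s))

/-- b-linear functional. -/
def BLinearFun (B : IdemBSpace F V) (f : V → K) : Prop :=
  (∀ x y, f (B.add x y) = F.add (f x) (f y)) ∧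
  (∀ (a : K) x, f (B.smul a x) = F.mul a (f x)) ∧
  (∀ (X : Set V) s, B.IsSup X s → F.toIdemSemigroup.IsSup (f '' X) (f s))

/-- ∧-subspace: closed under scalar multiplication and infima of nonempty subsets. -/
def WedgeSub (B : IdemBSpace F V) (W : Set V) : Prop :=
  (∀ (a : K), ∀ x ∈ W, B.smul a x ∈ W) ∧
  (∀ X ⊆ W, X.Nonempty → ∃ s ∈ W, (∀ x ∈ X, B.le s x) ∧
    ∀ b ∈ W, (∀ x ∈ X, B.le b x) → B.le b s)

end IdemBSpace

/-- Bounded upper semicontinuous maps X → K. -/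
def USCset {K : Type*} (F : IdemSemifield K) (X : Type*) [TopologicalSpace X] :
    Set (X → K) :=
  {f | (∃ b, ∀ t, F.toIdemSemigroup.le (f t) b) ∧
    ∀ b, IsClosed {t | F.toIdemSemigroup.le b (f t)}}

namespace Iwasawa

section
set_option linter.unusedSectionVars false
variable {G : Type*} [Group G] [Lattice G] [MulLeftMono G] [MulRightMono G]

lemma inf_mono_one {x y x' y' : G} (h : x ⊓ y = 1) (hx : 1 ≤ x') (hy : 1 ≤ y')
    (hxx : x' ≤ x) (hyy : y' ≤ y) : x' ⊓ y' = 1 :=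
  le_antisymm (h ▸ inf_le_inf hxx hyy) (le_inf hx hy)

lemma left_one {x y : G} (h : x ⊓ y = 1) : 1 ≤ x := h ▸ inf_le_left
lemma right_one {x y : G} (h : x ⊓ y = 1) : 1 ≤ y := h ▸ inf_le_right

lemma mul_dj {p q s : G} (hp : p ⊓ s = 1) (hq : q ⊓ s = 1) : (p * q) ⊓ s = 1 := by
  have h1 := left_one hp
  have h2 := left_one hq
  have hs := right_one hp
  apply le_antisymm _ (le_inf (one_le_mul h1 h2) hs)
  have : (p * q) ⊓ s ≤ p := by
    calc (p * q) ⊓ s ≤ (p * q) ⊓ (p * s) := inf_le_inf le_rfl (le_mul_of_one_le_left' h1)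
      _ = p * (q ⊓ s) := (mul_inf _ _ _).symm
      _ = p := by rw [hq, mul_one]
  calc (p * q) ⊓ s ≤ p ⊓ s := le_inf this inf_le_right
    _ = 1 := hp

lemma dj_mul_eq_sup {x y : G} (h : x ⊓ y = 1) : x * y = x ⊔ y := by
  have h1 : x * (x ⊓ y)⁻¹ * y = y ⊔ x := by
    rw [inv_inf, mul_sup, sup_mul]
    simp
  rw [h] at h1
  simpa [sup_comm] using h1

lemma dj_comm {x y : G} (h : x ⊓ y = 1) : x * y = y * x := by
  rw [dj_mul_eq_sup h, dj_mul_eq_sup (by rwa [inf_comm]), sup_comm]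

/-- membership in the polar of a set of positive elements -/
def Pol (S : Set G) (x : G) : Prop :=
  ∃ z, 1 ≤ z ∧ (∀ s ∈ S, z ⊓ s = 1) ∧ x ≤ z ∧ x⁻¹ ≤ z

lemma Pol.inv {S : Set G} {x : G} (h : Pol S x) : Pol S x⁻¹ := by
  obtain ⟨z, h1, h2, h3, h4⟩ := h
  exact ⟨z, h1, h2, h4, by simpa using h3⟩

lemma Pol.mul {S : Set G} {x y : G} (h : Pol S x) (h' : Pol S y) : Pol S (x * y) := by
  obtain ⟨z, h1, h2, h3, h4⟩ := h
  obtain ⟨t, k1, k2, k3, k4⟩ := h'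
  refine ⟨z * t * z, one_le_mul (one_le_mul h1 k1) h1,
    fun s hs => mul_dj (mul_dj (h2 s hs) (k2 s hs)) (h2 s hs), ?_, ?_⟩
  · exact (mul_le_mul' h3 k3).trans (le_mul_of_one_le_right' h1)
  · rw [mul_inv_rev, mul_assoc]
    exact (mul_le_mul' k4 h4).trans (le_mul_of_one_le_left' h1)

lemma Pol.of_dj {S : Set G} {x : G} (hx : 1 ≤ x) (h : ∀ s ∈ S, x ⊓ s = 1) : Pol S x :=
  ⟨x, hx, h, le_rfl, (inv_le_one'.2 hx).trans hx⟩

lemma Pol.dj {S : Set G} {x : G} (hx : 1 ≤ x) (h : Pol S x) {s : G} (hs : s ∈ S) :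
    x ⊓ s = 1 := by
  obtain ⟨z, h1, h2, h3, h4⟩ := h
  exact inf_mono_one (h2 s hs) hx (right_one (h2 s hs)) h3 le_rfl

/-- positive elements disjoint from `w` -/
def Dset (w : G) : Set G := {q | q ⊓ w = 1}

lemma inter_one {w x : G} (h : Pol {w} x) (h' : Pol (Dset w) x) : x = 1 := by
  obtain ⟨z, h1, h2, h3, h4⟩ := h
  obtain ⟨t, k1, k2, k3, k4⟩ := h'
  have h0 : t ⊓ z = 1 := k2 z (h2 w rfl)
  apply le_antisymm
  · rw [← h0]; exact le_inf k3 h3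
  · rw [← inv_le_one', ← h0]; exact le_inf k4 h4

lemma decomp_pm (x : G) : x = (x ⊔ 1) * (x⁻¹ ⊔ 1)⁻¹ := by
  have : x ⊔ 1 = x * (x⁻¹ ⊔ 1) := by rw [mul_sup]; simp [sup_comm]
  rw [this]; simp

lemma pm_dj (x : G) : (x ⊔ 1) ⊓ (x⁻¹ ⊔ 1) = 1 := by
  have h : x ⊔ 1 = x * (x⁻¹ ⊔ 1) := by rw [mul_sup]; simp [sup_comm]
  have h2 : x ⊓ 1 = (x⁻¹ ⊔ 1)⁻¹ := by rw [inv_sup]; simp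
  rw [h]
  nth_rewrite 2 [← one_mul (x⁻¹ ⊔ 1)]
  rw [← inf_mul, h2]; simp

lemma pol_comm {w x y : G} (h : Pol {w} x) (h' : Pol (Dset w) y) : Commute x y := by
  obtain ⟨z, h1, h2, h3, h4⟩ := h
  obtain ⟨t, k1, k2, k3, k4⟩ := h'
  have h0 : z ⊓ t = 1 := by rw [inf_comm]; exact k2 z (h2 w rfl)
  have key : ∀ p q : G, p ≤ z → q ≤ t → Commute (p ⊔ 1) (q ⊔ 1) := fun p q hp hq =>
    dj_comm (inf_mono_one h0 le_sup_right le_sup_right (sup_le hp h1) (sup_le hq k1))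
  rw [decomp_pm x, decomp_pm y]
  exact ((key _ _ h3 k3).mul_right (key _ _ h3 k4).inv_right).mul_left
    ((key _ _ h4 k3).mul_right (key _ _ h4 k4).inv_right).inv_left

lemma arch (hc : ∀ S : Set G, S.Nonempty → BddAbove S → ∃ s, IsLUB S s)
    {x y : G} (h : ∀ n : ℕ, x ^ n ≤ y) : x ≤ 1 := by
  obtain ⟨s, hs⟩ := hc (Set.range fun n : ℕ => x ^ n) ⟨_, 0, rfl⟩
    ⟨y, by rintro _ ⟨n, rfl⟩; exact h n⟩
  have : s ≤ s * x⁻¹ := hs.2 (by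
    rintro _ ⟨n, rfl⟩
    rw [le_mul_inv_iff_mul_le]
    exact hs.1 ⟨n + 1, pow_succ x n⟩)
  simpa using this

lemma decomp_pos (hc : ∀ S : Set G, S.Nonempty → BddAbove S → ∃ s, IsLUB S s)
    {w g : G} (hw : 1 ≤ w) (hg : 1 ≤ g) :
    ∃ h p, g = h * p ∧ 1 ≤ h ∧ Pol {w} p ∧ Pol (Dset w) h := by
  obtain ⟨p0, hp0⟩ := hc {p | p ≤ g ∧ p ⊓ w = 1} ⟨1, hg, by simpa using hw⟩
    ⟨g, fun p hp => hp.1⟩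
  have hp1 : 1 ≤ p0 := hp0.1 ⟨hg, by simpa using hw⟩
  have hpw : p0 ⊓ w = 1 := by
    apply le_antisymm _ (le_inf hp1 hw)
    have : p0 ≤ p0 * (p0 ⊓ w)⁻¹ := hp0.2 (by
      rintro p ⟨hpg, hp⟩
      rw [le_mul_inv_iff_mul_le, dj_mul_eq_sup
        (inf_mono_one hp (left_one hp) (le_inf hp1 hw) le_rfl inf_le_right)]
      exact sup_le (hp0.1 ⟨hpg, hp⟩) inf_le_left)
    rw [le_mul_inv_iff_mul_le] at this
    simpa using this
  have hpg : p0 ≤ g := hp0.2 fun p hp => hp.1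
  have hh : 1 ≤ g * p0⁻¹ := by rw [le_mul_inv_iff_mul_le]; simpa using hpg
  refine ⟨g * p0⁻¹, p0, by simp, hh, Pol.of_dj hp1 ?_, Pol.of_dj hh ?_⟩
  · rintro s rfl; exact hpw
  · intro q hq
    have hq1 := left_one hq
    have hr : 1 ≤ g * p0⁻¹ ⊓ q := le_inf hh hq1
    apply le_antisymm _ hr
    have : (g * p0⁻¹ ⊓ q) * p0 ≤ p0 := hp0.1 ⟨by
      rw [← le_mul_inv_iff_mul_le]; exact inf_le_left,
      mul_dj (inf_mono_one hq hr hw inf_le_right le_rfl) hpw⟩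
    simpa using this

lemma exists_proj (hc : ∀ S : Set G, S.Nonempty → BddAbove S → ∃ s, IsLUB S s)
    {w : G} (hw : 1 ≤ w) : ∃ π : G →* G, (∀ g, 1 ≤ g → 1 ≤ π g) ∧ π w = w ∧
    (∀ v, v ⊓ w = 1 → π v = 1) ∧ (∀ g, 1 ≤ g → π g = 1 → g ⊓ w = 1) := by
  have ex : ∀ g, ∃ h p, g = h * p ∧ Pol {w} p ∧ Pol (Dset w) h := by
    intro g
    obtain ⟨h1, p1, e1, -, a1, b1⟩ := decomp_pos hc hw (le_sup_right : 1 ≤ g ⊔ 1)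
    obtain ⟨h2, p2, e2, -, a2, b2⟩ := decomp_pos hc hw (le_sup_right : 1 ≤ g⁻¹ ⊔ 1)
    refine ⟨h1 * h2⁻¹, p1 * p2⁻¹, ?_, a1.mul a2.inv, b1.mul b2.inv⟩
    have c := (pol_comm (a1.mul a2.inv) b2.inv).eq
    rw [mul_assoc h1, ← c, decomp_pm g, e1, e2]
    group
  have uniq : ∀ h p h' p', Pol {w} p → Pol {w} p' → Pol (Dset w) h → Pol (Dset w) h' →
      h * p = h' * p' → h = h' := by
    intro h p h' p' a a' b b' e
    have e2 : h'⁻¹ * h = p' * p⁻¹ := by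
      rw [eq_mul_inv_iff_mul_eq, mul_assoc, e]; simp
    have : h'⁻¹ * h = 1 := inter_one (by rw [e2]; exact a'.mul a.inv) (b'.inv.mul b)
    exact (inv_mul_eq_one.1 this).symm
  have hone : Pol {w} (1 : G) := Pol.of_dj le_rfl (by rintro s rfl; simpa using hw)
  have hone' : Pol (Dset w) (1 : G) := Pol.of_dj le_rfl
    (fun s hs => by simpa using left_one hs)
  choose f p hf hp hB using ex
  let π : G →* G := MonoidHom.mk' f (by
    intro a b
    refine uniq _ (p (a * b)) _ (p a * p b) (hp _) ((hp a).mul (hp b)) (hB _)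
      ((hB a).mul (hB b)) ?_
    rw [← hf]
    nth_rewrite 1 [hf a, hf b]
    have c := (pol_comm (hp a) (hB b)).eq
    rw [mul_assoc, ← mul_assoc (p a), c]
    group)
  refine ⟨π, ?_, ?_, ?_, ?_⟩
  · intro g hg
    obtain ⟨h1, p1, e1, hh, a1, b1⟩ := decomp_pos hc hw hg
    have : f g = h1 := uniq _ (p g) _ p1 (hp g) a1 (hB g) b1 (by rw [← hf, e1])
    exact hh.trans this.ge
  · exact uniq _ (p w) _ 1 (hp w) hone (hB w)
      (Pol.of_dj hw fun s hs => by rw [inf_comm]; exact hs) ((hf w).symm.trans (mul_one w).symm)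
  · intro v hv
    exact uniq _ (p v) _ v (hp v)
      (Pol.of_dj (left_one hv) (by rintro s rfl; exact hv)) (hB v) hone' ((hf v).symm.trans (one_mul v).symm)
  · intro g hg h
    have h' : f g = 1 := h
    have e := hf g
    rw [h', one_mul] at e
    have := hp g
    rw [← e] at this
    exact this.dj hg rfl

/-- The splitting principle. -/
lemma split (hc : ∀ S : Set G, S.Nonempty → BddAbove S → ∃ s, IsLUB S s)
    (g : G) : ∃ π : G →* G, Monotone π ∧ π g = g ⊔ 1 ∧
    (∀ y, 1 ≤ y → π y = 1 → y ⊓ (g ⊔ 1) = 1) := by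
  obtain ⟨π, h1, h2, h3, h4⟩ := exists_proj hc (le_sup_right : 1 ≤ g ⊔ 1)
  refine ⟨π, ?_, ?_, h4⟩
  · intro a b hab
    have : 1 ≤ π (a⁻¹ * b) := h1 _ (by simpa using hab)
    rw [map_mul, map_inv] at this
    simpa using this
  · nth_rewrite 1 [decomp_pm g]
    rw [map_mul, map_inv, h2, h3 _ (by rw [inf_comm]; exact pm_dj g)]
    simp

lemma conj_dj (hc : ∀ S : Set G, S.Nonempty → BddAbove S → ∃ s, IsLUB S s)
    {p q : G} (h : p ⊓ q = 1) (g : G) : (g * p * g⁻¹) ⊓ q = 1 := by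
  obtain ⟨π, h1, h2, h3, h4⟩ := exists_proj hc (right_one h)
  apply h4
  · have := mul_le_mul_left (mul_le_mul_right (left_one h) g) g⁻¹
    simpa using this
  · simp [h3 p h]

lemma sq_inf (hc : ∀ S : Set G, S.Nonempty → BddAbove S → ∃ s, IsLUB S s)
    {t x y : G} (hx : t ≤ x * x) (hy : t ≤ y * y) : t ≤ (x ⊓ y) * (x ⊓ y) := by
  set d := x ⊓ y with hd
  set p := x * d⁻¹ with hp
  set q := y * d⁻¹ with hq
  have hpq : p ⊓ q = 1 := by rw [hp, hq, ← inf_mul, ← hd]; simp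
  have A : (p * (d * p * d⁻¹)) ⊓ (q * (d * q * d⁻¹)) = 1 := by
    have a1 : ∀ r, p ⊓ r = 1 → (p * (d * p * d⁻¹)) ⊓ r = 1 := fun r hr =>
      mul_dj hr (conj_dj hc hr d)
    have a2 := a1 q hpq
    rw [inf_comm] at a2 ⊢
    exact mul_dj a2 (conj_dj hc a2 d)
  have e1 : x * x = (p * (d * p * d⁻¹)) * (d * d) := by rw [hp]; group
  have e2 : y * y = (q * (d * q * d⁻¹)) * (d * d) := by rw [hq]; group
  calc t ≤ x * x ⊓ y * y := le_inf hx hy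
    _ = d * d := by rw [e1, e2, ← inf_mul, A, one_mul]

lemma conj_succ (t x : G) (n : ℕ) :
    t ^ (n + 1) * x * (t ^ (n + 1))⁻¹ = t ^ n * (t * x * t⁻¹) * (t ^ n)⁻¹ := by
  rw [pow_succ]; group

lemma conj_le {x y : G} (t : G) (h : x ≤ y) :
    t * x * t⁻¹ ≤ t * y * t⁻¹ :=
  mul_le_mul' (mul_le_mul' le_rfl h) le_rfl

lemma conj_pow_ge {x t : G} (hx : 1 ≤ x) (h : x * x ≤ t * x * t⁻¹) (n : ℕ) :
    x ^ n ≤ t ^ n * x * (t ^ n)⁻¹ ∧ x ≤ t ^ n * x * (t ^ n)⁻¹ := by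
  induction n with
  | zero => simpa using hx
  | succ n ih =>
    rw [conj_succ]
    have e : t ^ n * (x * x) * (t ^ n)⁻¹ =
      (t ^ n * x * (t ^ n)⁻¹) * (t ^ n * x * (t ^ n)⁻¹) := by group
    have h1 := conj_le (t ^ n) h
    rw [e] at h1
    constructor
    · rw [pow_succ]
      exact (mul_le_mul' ih.1 ih.2).trans h1
    · exact (le_mul_of_one_le_right' hx).trans ((mul_le_mul' ih.2 ih.2).trans h1)

lemma lemA (hc : ∀ S : Set G, S.Nonempty → BddAbove S → ∃ s, IsLUB S s)
    {x b t : G} (hx : 1 ≤ x) (hb : 1 ≤ b) (ht : t = b ∨ t = b⁻¹)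
    (h : x * x ≤ t * x * t⁻¹) : x = 1 := by
  have tb : Commute t b := by rcases ht with rfl | rfl <;> simp
  have key : ∀ m : ℕ, x ⊓ ((b ^ m * x⁻¹) ⊔ 1) = 1 := by
    intro m
    obtain ⟨π, h1, h2, h3⟩ := split hc (b ^ m * x⁻¹)
    have px : 1 ≤ π x := by simpa using h1 hx
    apply h3 x hx
    apply le_antisymm _ px
    have h4 : π x ≤ π b ^ m := by
      have : 1 ≤ π (b ^ m * x⁻¹) := by rw [h2]; exact le_sup_right
      simpa using this
    refine arch hc (y := π b ^ m) fun n => ?_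
    have h5 := (conj_pow_ge px (by simpa using h1 h) n).1
    refine h5.trans ((conj_le _ h4).trans ?_)
    have c : Commute (π t ^ n) (π b ^ m) := ((tb.map π).pow_pow n m)
    rw [c.eq]; simp
  have hz : b ⊓ x ≤ 1 := by
    refine arch hc (y := x) fun m => ?_
    set w := (b ^ m * x⁻¹) ⊔ 1 with hw
    have h1 : b ^ m ≤ x * w := by
      rw [dj_comm (key m), ← mul_inv_le_iff_le_mul]
      exact le_sup_left
    have z1 : 1 ≤ b ⊓ x := le_inf hb hx
    have h2 : (b ⊓ x) ⊓ w = 1 := inf_mono_one (key m) z1 le_sup_right inf_le_right le_rfl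
    have h3 : (b ⊓ x) ^ m ⊓ w = 1 := by
      clear_value w
      induction m with
      | zero => simpa using right_one h2
      | succ m ih => 
        have : ∀ k : ℕ, (b ⊓ x) ^ k ⊓ w = 1 := by
          intro k
          induction k with
          | zero => simpa using right_one h2
          | succ k ik => rw [pow_succ]; exact mul_dj ik h2
        exact this _
    have h4 : (b ⊓ x) ^ m ≤ x * w := (pow_le_pow_left' inf_le_left m).trans h1
    have h5 : (b ⊓ x) ^ m ≤ x * ((b ⊓ x) ^ m ⊓ w) := by
      rw [mul_inf]; exact le_inf (le_mul_of_one_le_left' hx) h4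
    rwa [h3, mul_one] at h5
  have hd : Commute b x := dj_comm (le_antisymm hz (le_inf hb hx))
  have ht' : Commute t x := by
    rcases ht with rfl | rfl
    · exact hd
    · exact hd.inv_left
  rw [ht'.eq] at h
  apply le_antisymm _ hx
  simpa using h

lemma weak (hc : ∀ S : Set G, S.Nonempty → BddAbove S → ∃ s, IsLUB S s)
    {a b t : G} (ha : 1 ≤ a) (hb : 1 ≤ b) (ht : t = b ∨ t = b⁻¹) :
    t * a * t⁻¹ ≤ a * a := by
  obtain ⟨π, h1, h2, h3⟩ := split hc (t * a * t⁻¹ * (a * a)⁻¹)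
  have hp : 1 ≤ π (t * a * t⁻¹ * (a * a)⁻¹) := by rw [h2]; exact le_sup_right
  have pa : π a = 1 := by
    refine lemA hc (b := π b) (t := π t) (by simpa using h1 ha) (by simpa using h1 hb) ?_ ?_
    · rcases ht with rfl | rfl <;> simp
    · rw [map_mul, map_inv, le_mul_inv_iff_mul_le] at hp
      simpa using hp
  have : t * a * t⁻¹ * (a * a)⁻¹ ⊔ 1 = 1 := by rw [← h2]; simp [pa]
  have := sup_eq_right.1 this
  rwa [mul_inv_le_iff_le_mul, one_mul] at this

lemma main_le (hc : ∀ S : Set G, S.Nonempty → BddAbove S → ∃ s, IsLUB S s)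
    {a b t : G} (ha : 1 ≤ a) (hb : 1 ≤ b) (ht : t = b ∨ t = b⁻¹) :
    t * a * t⁻¹ ≤ a := by
  -- the case in which the commutator is positive
  have core : ∀ a b t : G, 1 ≤ a → 1 ≤ b → (t = b ∨ t = b⁻¹) → 1 ≤ a⁻¹ * (t * a * t⁻¹) →
      a⁻¹ * (t * a * t⁻¹) = 1 := by
    intro a b t ha hb ht hc1
    set c := a⁻¹ * (t * a * t⁻¹) with hcdef
    have wk : ∀ (n : ℕ) (x : G), 1 ≤ x → t ^ n * x * (t ^ n)⁻¹ ≤ x * x := by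
      intro n x hx
      refine weak hc hx (one_le_pow_of_one_le' hb n) ?_
      rcases ht with rfl | rfl
      · exact Or.inl rfl
      · right; simp
    have wk' : ∀ (n : ℕ) (x : G), 1 ≤ x → (t ^ n)⁻¹ * x * (t ^ n) ≤ x * x := by
      intro n x hx
      have := weak hc hx (one_le_pow_of_one_le' hb n) (t := (t ^ n)⁻¹) (by
        rcases ht with rfl | rfl
        · exact Or.inr rfl
        · left; simp)
      simpa using this
    have E : ∀ n : ℕ, ∃ e, 1 ≤ e ∧ c ≤ e * e ∧ ∀ k : ℕ, k < n → e ≤ t ^ k * c * (t ^ k)⁻¹ := by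
      intro n
      induction n with
      | zero => exact ⟨c, hc1, le_mul_of_one_le_left' hc1, by simp⟩
      | succ n ih =>
        obtain ⟨e, e1, e2, e3⟩ := ih
        have cn : 1 ≤ t ^ n * c * (t ^ n)⁻¹ := by simpa using conj_le (t ^ n) hc1
        refine ⟨e ⊓ t ^ n * c * (t ^ n)⁻¹, le_inf e1 cn, sq_inf hc e2 ?_, ?_⟩
        · have h := wk' n _ cn
          have e0 : (t ^ n)⁻¹ * (t ^ n * c * (t ^ n)⁻¹) * t ^ n = c := by group
          rwa [e0] at h
        · intro k hk
          rcases Nat.lt_succ_iff_lt_or_eq.1 hk with hk | rfl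
          · exact inf_le_left.trans (e3 k hk)
          · exact inf_le_right
    have P : ∀ (e : G) (n : ℕ), (∀ k : ℕ, k < n → e ≤ t ^ k * c * (t ^ k)⁻¹) →
        a * e ^ n ≤ t ^ n * a * (t ^ n)⁻¹ := by
      intro e n
      induction n with
      | zero => intro _; simp
      | succ n ih =>
        intro h
        have h1 := ih fun k hk => h k (by omega)
        have h2 := h n (by omega)
        have e0 : t * a * t⁻¹ = a * c := by rw [hcdef]; group
        rw [conj_succ, e0, pow_succ, ← mul_assoc]
        refine (mul_le_mul' h1 h2).trans (le_of_eq ?_)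
        group
    refine le_antisymm (arch hc (y := a * a) fun n => ?_) hc1
    obtain ⟨e, e1, e2, e3⟩ := E n
    have h1 : a * e ^ n ≤ a * a := (P e n e3).trans (wk n a ha)
    have h2 : e ^ n ≤ a := by simpa using h1
    calc c ^ n ≤ (e * e) ^ n := pow_le_pow_left' e2 n
      _ = e ^ n * e ^ n := (Commute.refl e).mul_pow n
      _ ≤ a * a := mul_le_mul' h2 h2
  obtain ⟨π, h1, h2, -⟩ := split hc (a⁻¹ * (t * a * t⁻¹))
  have hp : 1 ≤ π (a⁻¹ * (t * a * t⁻¹)) := by rw [h2]; exact le_sup_right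
  have := core (π a) (π b) (π t) (by simpa using h1 ha) (by simpa using h1 hb)
    (by rcases ht with rfl | rfl <;> simp) (by simpa only [map_mul, map_inv] using hp)
  have h5 : a⁻¹ * (t * a * t⁻¹) ⊔ 1 = 1 := by
    rw [← h2]; simpa only [map_mul, map_inv] using this
  have := sup_eq_right.1 h5
  rwa [inv_mul_le_iff_le_mul, mul_one] at this

theorem commute_all (hc : ∀ S : Set G, S.Nonempty → BddAbove S → ∃ s, IsLUB S s)
    (a b : G) : Commute a b := by
  have pos : ∀ a b : G, 1 ≤ a → 1 ≤ b → Commute a b := by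
    intro a b ha hb
    have h1 := main_le hc ha hb (Or.inl rfl)
    have h2 := main_le hc ha hb (Or.inr rfl)
    have h3 := conj_le b h2
    have h4 : b * (b⁻¹ * a * b⁻¹⁻¹) * b⁻¹ = a := by group
    rw [h4] at h3
    have := le_antisymm h1 h3
    rw [mul_inv_eq_iff_eq_mul] at this
    exact this.symm
  rw [decomp_pm a, decomp_pm b]
  have k := fun x y : G => pos (x ⊔ 1) (y ⊔ 1) le_sup_right le_sup_right
  exact ((k _ _).mul_right (k _ _).inv_right).mul_left
    ((k _ _).mul_right (k _ _).inv_right).inv_left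

end

end Iwasawa

/-- Every b-complete idempotent semifield is commutative under multiplication. -/
theorem stmt5 {K : Type*} (F : IdemSemifield K) (hb : F.BComplete) :
    ∀ x y, F.mul x y = F.mul y x := by
  intro x y
  by_cases hx : x = F.zero
  · rw [hx, F.zero_mul, F.mul_zero]
  by_cases hy : y = F.zero
  · rw [hy, F.zero_mul, F.mul_zero]
  have hxinv := F.inv_exists x hx
  have h10 : F.one ≠ F.zero := by
    intro h
    apply hx
    rw [← F.one_mul x, h, F.zero_mul]
  have hmul : ∀ a b, a ≠ F.zero → b ≠ F.zero → F.mul a b ≠ F.zero := by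
    intro a b ha hb' h
    obtain ⟨c, hc, hc'⟩ := F.inv_exists a ha
    apply hb'
    rw [← F.one_mul b, ← hc', F.mul_assoc, h, F.mul_zero]
  have hadd : ∀ a b, F.add a b = F.zero → a = F.zero := by
    intro a b h
    have h1 : F.add a (F.add a b) = F.add a b := by rw [← F.add_assoc, F.add_idem]
    rw [h, F.add_comm, F.zero_add] at h1
    exact h1
  choose iv hiv hiv' using F.inv_exists
  have hivz : ∀ a (ha : a ≠ F.zero), iv a ha ≠ F.zero := by
    intro a ha h
    have := hiv a ha
    rw [h, F.mul_zero] at this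
    exact h10 this.symm
  let G := {a : K // a ≠ F.zero}
  let : Mul G := ⟨fun a b => ⟨F.mul a.1 b.1, hmul _ _ a.2 b.2⟩⟩
  let : Inv G := ⟨fun a => ⟨iv a.1 a.2, hivz _ _⟩⟩
  let : One G := ⟨⟨F.one, h10⟩⟩
  let : Group G := Group.ofLeftAxioms
    (fun a b c => Subtype.ext (F.mul_assoc a.1 b.1 c.1))
    (fun a => Subtype.ext (F.one_mul a.1))
    (fun a => Subtype.ext (hiv' a.1 a.2))
  let : Max G := ⟨fun a b => ⟨F.add a.1 b.1, fun h => a.2 (hadd _ _ h)⟩⟩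
  let SL : SemilatticeSup G := SemilatticeSup.mk'
    (fun a b => Subtype.ext (F.add_comm a.1 b.1))
    (fun a b c => Subtype.ext (F.add_assoc a.1 b.1 c.1))
    (fun a => Subtype.ext (F.add_idem a.1))
  have le_iff : ∀ a b : G, a ≤ b ↔ F.toIdemSemigroup.le a.1 b.1 := by
    intro a b
    rw [← sup_eq_right]
    exact Subtype.ext_iff
  have ml : ∀ a b c : G, b ≤ c → a * b ≤ a * c := by
    intro a b c h
    rw [le_iff] at h ⊢
    change F.add (F.mul a.1 b.1) (F.mul a.1 c.1) = F.mul a.1 c.1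
    rw [← F.left_distrib]
    exact congrArg _ h
  have mr : ∀ a b c : G, b ≤ c → b * a ≤ c * a := by
    intro a b c h
    rw [le_iff] at h ⊢
    change F.add (F.mul b.1 a.1) (F.mul c.1 a.1) = F.mul c.1 a.1
    rw [← F.right_distrib]
    exact congrArg (fun z => F.mul z a.1) h
  have iv_le : ∀ a b : G, a ≤ b → b⁻¹ ≤ a⁻¹ := by
    intro a b h
    have h1 := mr b⁻¹ _ _ (ml a⁻¹ _ _ h)
    rwa [inv_mul_cancel, one_mul, mul_assoc, mul_inv_cancel, mul_one] at h1
  have iv_le' : ∀ a b : G, a⁻¹ ≤ b → b⁻¹ ≤ a := by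
    intro a b h
    have h1 := iv_le _ _ h
    rwa [inv_inv] at h1
  have iv_le'' : ∀ a b : G, a ≤ b⁻¹ → b ≤ a⁻¹ := by
    intro a b h
    have h1 := iv_le _ _ h
    rwa [inv_inv] at h1
  let : Lattice G :=
    { SL with
      inf := fun a b => (a⁻¹ ⊔ b⁻¹)⁻¹
      inf_le_left := fun a b => iv_le' _ _ le_sup_left
      inf_le_right := fun a b => iv_le' _ _ le_sup_right
      le_inf := fun a b c h1 h2 => iv_le'' _ _ (sup_le (iv_le _ _ h1) (iv_le _ _ h2)) }
  have : MulLeftMono G := ⟨fun a b c h => ml a b c h⟩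
  have : MulRightMono G := ⟨fun a b c h => mr a b c h⟩
  have comp : ∀ S : Set G, S.Nonempty → BddAbove S → ∃ s, IsLUB S s := by
    rintro S ⟨a, ha⟩ ⟨u, hu⟩
    obtain ⟨s, hs1, hs2⟩ := hb (Subtype.val '' S)
      ⟨u.1, by rintro _ ⟨v, hv, rfl⟩; exact (le_iff _ _).1 (hu hv)⟩
    have hs0 : s ≠ F.zero := by
      intro h
      have h1 : F.add a.1 s = s := hs1 a.1 ⟨a, ha, rfl⟩
      rw [h] at h1
      exact a.2 (hadd _ _ h1)
    refine ⟨⟨s, hs0⟩, ?_, ?_⟩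
    · intro v hv
      exact (le_iff _ _).2 (hs1 _ ⟨v, hv, rfl⟩)
    · intro v hv
      refine (le_iff _ _).2 (hs2 _ ?_)
      rintro _ ⟨r, hr, rfl⟩
      exact (le_iff _ _).1 (hv hr)
  have h := Iwasawa.commute_all comp (⟨x, hx⟩ : G) ⟨y, hy⟩
  exact congrArg Subtype.val h.eq
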